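/- arXiv:1807.10450 — 2 statements merged into one kernel-verified Lean document; each statement's English description precedes it below -/
import Mathlib

section
/- Let m be a positive square-free integer. There exists a positive real constant C (depending only on m) such that for all integers n ≥ m, C·(n/m)^(φ(m)/m − 1) ≤ ρ(n,m) ≤ (n/m)^(φ(m)/m − 1). -/
open Equiv Equiv.Perm

lemma orderOf_finRotate_succ (d : ℕ) : orderOf (finRotate (d+1)) = d+1 := by
  cases d with
  | zero => exact orderOf_eq_one_iff.2 (Equiv.ext fun i => Subsingleton.elim (α := Fin 1) _ _)
  | succ d => rw [← Equiv.Perm.lcm_cycleType, cycleType_finRotate]; simp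

noncomputable def cA (m : ℕ) (α : Type) : ℕ := Nat.card {π : Perm α // (orderOf π).Coprime m}

lemma orderOf_sumCongr' {α β : Type} (a : Perm α) (b : Perm β) :
    orderOf (Equiv.Perm.sumCongr a b) = (orderOf a).lcm (orderOf b) := by
  have := orderOf_injective (Equiv.Perm.sumCongrHom α β) Equiv.Perm.sumCongrHom_injective (a, b)
  rw [Prod.orderOf] at this
  exact this

lemma fiber_sum (m d : ℕ) (β : Type) [Finite β] :
    Nat.card {π : Perm (Fin (d+1) ⊕ β) // (orderOf π).Coprime m ∧
      ∀ i, π (Sum.inl i) = Sum.inl (finRotate _ i)} =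
    if (d+1).Coprime m then cA m β else 0 := by
  have key : ∀ π : Perm (Fin (d+1) ⊕ β), (∀ i, π (Sum.inl i) = Sum.inl (finRotate _ i)) →
      ∃ σ : Perm β, π = Equiv.Perm.sumCongr (finRotate _) σ := by
    intro π h
    have h1 : π ∈ (Equiv.Perm.sumCongrHom (Fin (d+1)) β).range := by
      apply Equiv.Perm.mem_sumCongrHom_range_of_perm_mapsTo_inl
      rintro _ ⟨i, rfl⟩
      exact ⟨_, (h i).symm⟩
    obtain ⟨⟨a, b⟩, rfl⟩ := h1
    refine ⟨b, ?_⟩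
    have : a = finRotate _ := by
      ext i
      have := h i
      have h3 : a i = finRotate _ i := Sum.inl_injective this
      rw [h3]
    rw [this]; rfl
  split_ifs with hc
  · symm
    refine Nat.card_congr (Equiv.ofBijective (fun σ => ⟨Equiv.Perm.sumCongr (finRotate _) σ.1, ?_, ?_⟩) ⟨?_, ?_⟩)
    · rw [orderOf_sumCongr', orderOf_finRotate_succ]
      exact Nat.Coprime.of_dvd_left (Nat.lcm_dvd_mul _ _) (Nat.Coprime.mul_left hc σ.2)
    · intro i; simp
    · intro σ τ h
      simp only [Subtype.mk.injEq] at h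
      have := @Equiv.Perm.sumCongrHom_injective (Fin (d+1)) β (finRotate _, σ.1) (finRotate _, τ.1) h
      exact Subtype.ext (Prod.ext_iff.1 this).2
    · rintro ⟨π, h1, h2⟩
      obtain ⟨σ, rfl⟩ := key π h2
      refine ⟨⟨σ, ?_⟩, rfl⟩
      rw [orderOf_sumCongr'] at h1
      exact Nat.Coprime.of_dvd_left (Nat.dvd_lcm_right _ _) h1
  · rw [Nat.card_eq_zero]; left
    constructor
    rintro ⟨π, h1, h2⟩
    obtain ⟨σ, rfl⟩ := key π h2
    rw [orderOf_sumCongr', orderOf_finRotate_succ] at h1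
    exact hc (Nat.Coprime.of_dvd_left (Nat.dvd_lcm_left _ _) h1)

lemma fiber_emb (m d n : ℕ) (e : Fin (d+1) ↪ Fin n) :
    Nat.card {π : Perm (Fin n) // (orderOf π).Coprime m ∧
      ∀ i, π (e i) = e (finRotate _ i)} =
    if (d+1).Coprime m then cA m (Fin (n-(d+1))) else 0 := by
  obtain ⟨s, hs⟩ : ∃ s : Fin (d+1) ⊕ Fin (n-(d+1)) ≃ Fin n, ∀ i, s (Sum.inl i) = e i := by
    classical
    have hcard : Fintype.card (↥(Set.range e)ᶜ) = n - (d+1) := by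
      rw [Fintype.card_compl_set, Fintype.card_fin, Set.card_range_of_injective e.injective]
      simp
    refine ⟨(Equiv.sumCongr (Equiv.ofInjective e e.injective) (Fintype.equivFinOfCardEq hcard).symm).trans
      (Equiv.Set.sumCompl (Set.range e)), ?_⟩
    intro i; simp
  rw [← fiber_sum]
  symm
  refine Nat.card_congr (Equiv.subtypeEquiv s.permCongr ?_)
  intro π
  have : orderOf (s.permCongr π) = orderOf π := MulEquiv.orderOf_eq s.permCongrHom π
  rw [this]
  simp only [Equiv.permCongr_apply, ← hs, Equiv.symm_apply_apply, s.injective.eq_iff]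

lemma count_period (m d n : ℕ) :
    Nat.card {q : Perm (Fin n) × Fin n // (orderOf q.1).Coprime m ∧
      Function.minimalPeriod q.1 q.2 = d+1} =
    n.descFactorial (d+1) * if (d+1).Coprime m then cA m (Fin (n-(d+1))) else 0 := by
  have h1 : Nat.card (Σ e : Fin (d+1) ↪ Fin n, {π : Perm (Fin n) // (orderOf π).Coprime m ∧
      ∀ i, π (e i) = e (finRotate _ i)}) =
     n.descFactorial (d+1) * if (d+1).Coprime m then cA m (Fin (n-(d+1))) else 0 := by
    rw [Nat.card_sigma]
    simp only [fiber_emb]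
    rw [Finset.sum_const, Finset.card_univ, Fintype.card_embedding_eq]
    simp
  rw [← h1]
  symm
  have iter : ∀ (e : Fin (d+1) ↪ Fin n) (π : Perm (Fin n)), (∀ i, π (e i) = e (finRotate _ i)) →
      ∀ k (hk : k < d+1), (π^[k]) (e 0) = e ⟨k, hk⟩ := by
    intro e π h k
    induction k with
    | zero => intro hk; rfl
    | succ k ih =>
      intro hk
      rw [Function.iterate_succ_apply', ih (by omega), h]
      congr 1
      rw [finRotate_of_lt (by omega)]
  refine Nat.card_congr (Equiv.ofBijective (fun x => ⟨(x.2.1, x.1 0), x.2.2.1, ?_⟩) ⟨?_, ?_⟩)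
  · obtain ⟨e, π, hπ, h⟩ := x
    have it := iter e π h
    apply Nat.le_antisymm
    · apply Function.IsPeriodicPt.minimalPeriod_le (by omega)
      show (π^[d+1]) (e 0) = e 0
      rw [Function.iterate_succ_apply', it d (by omega), h]
      congr 1
      exact finRotate_last'
    · by_contra hlt
      push Not at hlt
      have hper : Function.minimalPeriod π (e 0) ≠ 0 := by
        apply (Function.minimalPeriod_pos_of_mem_periodicPts _).ne'
        refine ⟨d+1, by omega, ?_⟩
        show (π^[d+1]) (e 0) = e 0
        rw [Function.iterate_succ_apply', it d (by omega), h]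
        congr 1
        exact finRotate_last'
      have := it _ hlt
      rw [Function.iterate_minimalPeriod] at this
      have := e.injective this
      exact hper (by simpa using (congrArg Fin.val this).symm)
  · rintro ⟨e, π, hπ, h⟩ ⟨e', π', hπ', h'⟩ heq
    simp only [Subtype.mk.injEq, Prod.mk.injEq] at heq
    obtain ⟨rfl, h0⟩ := heq
    have : e = e' := by
      ext ⟨k, hk⟩
      rw [← iter e π h k hk, ← iter e' π h' k hk, h0]
    subst this
    rfl
  · rintro ⟨⟨π, x⟩, hπ, hx⟩
    simp only at hπ hx
    have hinj : Function.Injective (fun i : Fin (d+1) => (π^[(i:ℕ)]) x) := by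
      intro i j hij
      have := Function.iterate_injOn_Iio_minimalPeriod (f := π) (x := x)
        (by rw [hx]; exact i.2) (by rw [hx]; exact j.2) hij
      exact Fin.ext this
    refine ⟨⟨⟨_, hinj⟩, ⟨π, hπ, ?_⟩⟩, ?_⟩
    · intro i
      simp only [Function.Embedding.coeFn_mk]
      rw [← Function.iterate_succ_apply' (f := π)]
      rcases Nat.lt_or_ge i.1 d with hi | hi
      · have : i = ⟨i.1, by omega⟩ := rfl
        rw [this, finRotate_of_lt hi]
      · have : i = ⟨d, by omega⟩ := Fin.ext (by simp; omega)
        rw [this, finRotate_last']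
        simp only [Nat.succ_eq_add_one]
        rw [← hx, Function.iterate_minimalPeriod]; simp
    · simp

lemma count_rec (m n : ℕ) :
    n * cA m (Fin n) = ∑ d ∈ Finset.range n,
      n.descFactorial (d+1) * if (d+1).Coprime m then cA m (Fin (n-(d+1))) else 0 := by
  classical
  have h1 : n * cA m (Fin n) = (Finset.univ.filter
      (fun q : Perm (Fin n) × Fin n => (orderOf q.1).Coprime m)).card := by
    have : (Finset.univ.filter
      (fun q : Perm (Fin n) × Fin n => (orderOf q.1).Coprime m)) =
      (Finset.univ.filter (fun π : Perm (Fin n) => (orderOf π).Coprime m)) ×ˢ Finset.univ := by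
      ext; simp
    rw [this, Finset.card_product, cA, Nat.card_eq_fintype_card, Fintype.card_subtype, mul_comm]
    simp
  rw [h1, Finset.card_eq_sum_card_fiberwise (t := Finset.range n)
    (f := fun q => Function.minimalPeriod q.1 q.2 - 1)]
  · apply Finset.sum_congr rfl
    intro d hd
    rw [← count_period, Nat.card_eq_fintype_card, Fintype.card_subtype, Finset.filter_filter]
    congr 1
    ext ⟨π, x⟩
    have : 0 < Function.minimalPeriod π x :=
      Function.minimalPeriod_pos_of_mem_periodicPts (π.injective.mem_periodicPts x)
    simp only [Finset.mem_filter, Finset.mem_univ, true_and]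
    constructor <;> rintro ⟨a, b⟩ <;> exact ⟨a, by omega⟩
  · rintro ⟨π, x⟩ -
    have : 0 < Function.minimalPeriod π x :=
      Function.minimalPeriod_pos_of_mem_periodicPts (π.injective.mem_periodicPts x)
    have h2 : Function.minimalPeriod π x ≤ n := by
      have hinj : Function.Injective (fun i : Fin (Function.minimalPeriod π x) => (π^[(i:ℕ)]) x) := by
        intro i j hij
        exact Fin.ext (Function.iterate_injOn_Iio_minimalPeriod (f := π) (x := x) i.2 j.2 hij)
      simpa using Fintype.card_le_of_injective _ hinj
    simp; omega

/-- `rho n m` is the proportion of permutations in `Sym(n)` whose order is coprime to `m`. -/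
noncomputable def rho (n m : ℕ) : ℝ :=
  (Finset.univ.filter (fun π : Equiv.Perm (Fin n) => Nat.Coprime (orderOf π) m)).card /
    (Nat.factorial n : ℝ)

lemma rho_eq (n m : ℕ) : rho n m = cA m (Fin n) / (n.factorial : ℝ) := by
  rw [rho, cA, Nat.card_eq_fintype_card, Fintype.card_subtype]

lemma rho_rec (n m : ℕ) : (n : ℝ) * rho n m =
    ∑ d ∈ Finset.range n, if (d+1).Coprime m then rho (n-(d+1)) m else 0 := by
  have h := congrArg (Nat.cast : ℕ → ℝ) (count_rec m n)
  push_cast at h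
  rw [rho_eq, ← mul_div_assoc, h, Finset.sum_div]
  apply Finset.sum_congr rfl
  intro d hd
  have hd : d + 1 ≤ n := by simpa [Nat.succ_le_iff] using hd
  split_ifs
  · rw [rho_eq, ← Nat.factorial_mul_descFactorial hd]
    have h1 : ((n-(d+1)).factorial : ℝ) ≠ 0 := by positivity
    have h2 : (n.descFactorial (d+1) : ℝ) ≠ 0 := by
      have := Nat.descFactorial_pos.2 hd
      positivity
    push_cast
    field_simp
  · simp

lemma rho_step (n m : ℕ) (h : m ≤ n) : (n : ℝ) * rho n m = ((n:ℝ) - m) * rho (n-m) m +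
    ∑ d ∈ Finset.range m, if (d+1).Coprime m then rho (n-(d+1)) m else 0 := by
  obtain ⟨k, rfl⟩ := Nat.exists_eq_add_of_le h
  have h1 := rho_rec (m+k) m
  have h2 := rho_rec k m
  rw [Finset.sum_range_add] at h1
  rw [h1, Nat.add_sub_cancel_left]
  push_cast
  rw [add_sub_cancel_left, h2, add_comm]
  congr 1
  apply Finset.sum_congr rfl
  intro d hd
  have e1 : m + k - (m + d + 1) = k - (d+1) := by omega
  have e2 : (m + d + 1).Coprime m ↔ (d+1).Coprime m := by
    rw [add_assoc]; simp
  simp only [e1, e2]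

lemma div_case (n m d : ℕ) (hm : 0 < m) (h : m ≤ n) (hd : d < m) :
    (n - (d+1)) / m = if d < n % m then n / m else n / m - 1 := by
  have h1 := Nat.div_add_mod n m
  have hk : 0 < n / m := Nat.div_pos h hm
  have hr := Nat.mod_lt n hm
  generalize n / m = k at *
  generalize n % m = r at *
  obtain ⟨k, rfl⟩ := Nat.exists_eq_succ_of_ne_zero hk.ne'
  subst h1
  rw [Nat.succ_eq_add_one, mul_add, mul_one]
  split_ifs with hc
  · have : m * k + m + r - (d+1) = (r - (d+1)) + m * (k+1) := by
      rw [mul_add]; omega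
    rw [this, Nat.add_mul_div_left _ _ hm, Nat.div_eq_of_lt (by omega)]; simp
  · have : m * k + m + r - (d+1) = (m + r - (d+1)) + m * k := by omega
    rw [this, Nat.add_mul_div_left _ _ hm, Nat.div_eq_of_lt (by omega)]; simp

lemma totient_split (m r : ℕ) (hr : r < m) : ∃ α β : ℕ, α + β = m.totient ∧ α ≤ r ∧ r + β ≤ m ∧
    ∀ x y : ℝ, (∑ d ∈ Finset.range m, if (d+1).Coprime m then (if d < r then x else y) else 0)
      = α * x + β * y := by
  classical
  refine ⟨(((Finset.range m).filter (fun d => (d+1).Coprime m)).filter (fun d => d < r)).card,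
    (((Finset.range m).filter (fun d => (d+1).Coprime m)).filter (fun d => ¬ d < r)).card,
    ?_, ?_, ?_, ?_⟩
  · rw [Finset.card_filter_add_card_filter_not, ← Nat.filter_coprime_Ico_eq_totient m 1]
    apply Finset.card_bij (fun d _ => d + 1)
    · intro d hd
      simp only [Finset.mem_filter, Finset.mem_range, Finset.mem_Ico] at hd ⊢
      exact ⟨by omega, hd.2.symm⟩
    · intro a _ b _ h; omega
    · intro c hc
      simp only [Finset.mem_filter, Finset.mem_Ico] at hc
      refine ⟨c - 1, ?_, by omega⟩
      have : c - 1 + 1 = c := by omega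
      simp only [Finset.mem_filter, Finset.mem_range, this]
      exact ⟨by omega, hc.2.symm⟩
  · calc _ ≤ (Finset.range r).card := Finset.card_le_card (by intro d; simp)
      _ = r := by simp
  · have : _ ≤ (Finset.Ico r m).card := Finset.card_le_card (s := (((Finset.range m).filter (fun d => (d+1).Coprime m)).filter (fun d => ¬ d < r))) (by intro d; simp; tauto)
    simp only [Nat.card_Ico] at this
    omega
  · intro x y
    rw [← Finset.sum_filter, Finset.sum_ite]
    simp

lemma step_bounds (n m : ℕ) (hm : 0 < m) (h : m ≤ n) : ∃ α β : ℕ, α + β = m.totient ∧ α ≤ n % m ∧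
    n % m + β ≤ m ∧ ∀ V : ℕ → ℝ,
    ((∀ j < n, rho j m ≤ V (j / m)) →
      n * rho n m ≤ ((n : ℝ) - m + β) * V (n / m - 1) + α * V (n / m)) ∧
    ((∀ j < n, V (j / m) ≤ rho j m) →
      ((n : ℝ) - m + β) * V (n / m - 1) + α * V (n / m) ≤ n * rho n m) := by
  obtain ⟨α, β, h1, h2, h3, h4⟩ := totient_split m (n % m) (Nat.mod_lt n hm)
  refine ⟨α, β, h1, h2, h3, fun V => ?_⟩
  have e : ((n : ℝ) - m + β) * V (n / m - 1) + α * V (n / m) = ((n:ℝ) - m) * V ((n-m)/m) +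
      ∑ d ∈ Finset.range m, if (d+1).Coprime m then V ((n-(d+1))/m) else 0 := by
    have : ∑ d ∈ Finset.range m, (if (d+1).Coprime m then V ((n-(d+1))/m) else 0) =
       ∑ d ∈ Finset.range m, if (d+1).Coprime m then
        (if d < n % m then V (n / m) else V (n / m - 1)) else 0 := by
      apply Finset.sum_congr rfl
      intro d hd
      rw [div_case n m d hm h (Finset.mem_range.1 hd), apply_ite V]
    rw [this, h4]
    have : (n - m) / m = n / m - 1 := by
      simpa using Nat.sub_mul_div n m 1
    rw [this]; ring
  have hnm : (0:ℝ) ≤ (n:ℝ) - m := by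
    rw [sub_nonneg]; exact_mod_cast h
  rw [e, rho_step n m h]
  constructor
  · intro hV
    apply add_le_add (mul_le_mul_of_nonneg_left (hV _ (by omega)) hnm)
    apply Finset.sum_le_sum
    intro d _
    split_ifs
    · exact hV _ (by omega)
    · exact le_rfl
  · intro hV
    apply add_le_add (mul_le_mul_of_nonneg_left (hV _ (by omega)) hnm)
    apply Finset.sum_le_sum
    intro d _
    split_ifs
    · exact hV _ (by omega)
    · exact le_rfl

lemma rho_le_one (n m : ℕ) : rho n m ≤ 1 := by
  rw [rho, div_le_one (by positivity)]
  have : (Finset.univ.filter (fun π : Equiv.Perm (Fin n) => Nat.Coprime (orderOf π) m)).card ≤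
      n.factorial := (Finset.card_le_univ _).trans (by simp [Fintype.card_perm])
  exact_mod_cast this

lemma rho_ge (n m : ℕ) : 1 / (n.factorial : ℝ) ≤ rho n m := by
  rw [rho]
  apply div_le_div_of_nonneg_right _ (by positivity)
  have : 0 < (Finset.univ.filter (fun π : Equiv.Perm (Fin n) => Nat.Coprime (orderOf π) m)).card :=
    Finset.card_pos.2 ⟨1, by simp⟩
  exact_mod_cast this

lemma bern (t b : ℝ) (ht : 0 < 1 + t) (hb : 0 ≤ b) (hb1 : b ≤ 1) : 1 ≤ (1 + b * t) * (1 + t) ^ (-b) := by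
  have h := rpow_one_add_le_one_add_mul_self (s := t) (by linarith) hb hb1
  rw [Real.rpow_neg ht.le, ← div_eq_mul_inv, one_le_div (Real.rpow_pos_of_pos ht _)]
  exact h

lemma upper (m : ℕ) (hm : 0 < m) (b : ℝ) (hb : 0 ≤ b) (hb1 : b ≤ 1) (hbm : m * b = m - m.totient) (n : ℕ) :
    rho n m ≤ (((n / m : ℕ) : ℝ) + 1) ^ (-b) := by
  induction n using Nat.strong_induction_on with
  | _ n ih =>
    rcases Nat.lt_or_ge n m with h | h
    · rw [Nat.div_eq_of_lt h]; simpa using rho_le_one n m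
    obtain ⟨α, β, h1, h2, h3, h4⟩ := step_bounds n m hm h
    have h5 := (h4 (fun k => ((k:ℝ)+1)^(-b))).1 ih
    have hn := Nat.div_add_mod n m
    have hk : 0 < n / m := Nat.div_pos h hm
    have hn0 : (0:ℝ) < n := by exact_mod_cast hm.trans_le h
    generalize n / m = k at *
    generalize n % m = r at *
    have hk' : (0:ℝ) < k := by exact_mod_cast hk
    simp only [Nat.cast_sub (show 1 ≤ k from hk), Nat.cast_one, sub_add_cancel] at h5
    have hB := bern (1 / k) b (by positivity) hb hb1
    have e : ((k:ℝ)+1) ^ (-b) = (1 + 1 / (k:ℝ)) ^ (-b) * (k:ℝ) ^ (-b) := by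
      rw [← Real.mul_rpow (by positivity) (by positivity)]; congr 1; field_simp
    have hle : ((k:ℝ)+1) ^ (-b) ≤ (k:ℝ) ^ (-b) :=
      Real.rpow_le_rpow_of_nonpos hk' (by linarith) (by linarith)
    have hU' : 0 < (k:ℝ)^(-b) := Real.rpow_pos_of_pos hk' _
    have hkey : (k:ℝ) * (k:ℝ)^(-b) ≤ (k + b) * ((k:ℝ)+1)^(-b) := by
      rw [e]
      have := mul_le_mul_of_nonneg_left hB (mul_pos hk' hU').le
      calc _ ≤ _ := by simpa using this
        _ = _ := by field_simp
    generalize ((k:ℝ)+1)^(-b) = U at *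
    generalize (k:ℝ)^(-b) = U' at *
    have hn' : (n:ℝ) = m * k + r := by exact_mod_cast hn.symm
    have h1' : (α:ℝ) + β = m.totient := by exact_mod_cast h1
    have h3' : (r:ℝ) + β ≤ m := by exact_mod_cast h3
    have h6 := mul_le_mul_of_nonneg_left hkey (Nat.cast_nonneg (α := ℝ) m)
    have h7 : (m:ℝ) * ((k + b) * U) = (m * k + m - α - β) * U := by
      have : (m:ℝ) * ((k + b) * U) = (m * k + m * b) * U := by ring
      rw [this, hbm, ← h1']; ring
    have h8 := mul_le_mul_of_nonneg_left hle (sub_nonneg.2 h3')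
    have : (n:ℝ) * rho n m ≤ n * U := by
      rw [hn'] at h5 ⊢
      nlinarith
    exact le_of_mul_le_mul_left this hn0

noncomputable def lowV (m : ℕ) (b : ℝ) (k : ℕ) : ℝ :=
  if k = 0 then 1 / (m.factorial : ℝ) else (1 - b) / m.factorial * (k : ℝ) ^ (-b)

lemma lower (m : ℕ) (hm : 0 < m) (b : ℝ) (hb : 0 ≤ b) (hb1 : b < 1) (hbm : m * b = m - m.totient) (n : ℕ) :
    lowV m b (n / m) ≤ rho n m := by
  induction n using Nat.strong_induction_on with
  | _ n ih =>
    rcases Nat.lt_or_ge n m with h | h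
    · rw [Nat.div_eq_of_lt h, lowV, if_pos rfl]
      refine le_trans ?_ (rho_ge n m)
      apply one_div_le_one_div_of_le (by positivity)
      exact_mod_cast Nat.factorial_le h.le
    obtain ⟨α, β, h1, h2, h3, h4⟩ := step_bounds n m hm h
    have h5 := (h4 (lowV m b)).2 ih
    have hn := Nat.div_add_mod n m
    have hk : 0 < n / m := Nat.div_pos h hm
    have hn0 : (0:ℝ) < n := by exact_mod_cast hm.trans_le h
    generalize n / m = k at *
    generalize n % m = r at *
    have hk' : (0:ℝ) < k := by exact_mod_cast hk
    have hf : (0:ℝ) < m.factorial := by positivity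
    have hL' : 0 ≤ lowV m b (k - 1) := by
      have : 0 < 1 - b := by linarith
      unfold lowV; split_ifs <;> positivity
    have hkey : (k:ℝ) * lowV m b k ≤ (k - b) * lowV m b (k - 1) := by
      rcases Nat.lt_or_ge 1 k with h' | h'
      · have hk1 : (1:ℝ) < k := by exact_mod_cast h'
        have hk0 : (0:ℝ) < k - 1 := by linarith
        rw [lowV, lowV, if_neg (by omega), if_neg (by omega)]
        rw [Nat.cast_sub (show 1 ≤ k from hk), Nat.cast_one]
        have hlt : 0 < 1 + -(1 / (k:ℝ)) := by
          have : 1 + -(1 / (k:ℝ)) = (k - 1) / k := by field_simp; ring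
          rw [this]; positivity
        have hB := bern (-(1 / (k:ℝ))) b hlt hb hb1.le
        have e : ((k:ℝ)-1) ^ (-b) = (1 + -(1 / (k:ℝ))) ^ (-b) * (k:ℝ) ^ (-b) := by
          rw [← Real.mul_rpow hlt.le (by positivity)]; congr 1; field_simp; ring
        rw [e]
        have hp : 0 ≤ (1 - b) / m.factorial * (k : ℝ) ^ (-b) * k := by
          have : 0 < 1 - b := by linarith
          positivity
        have := mul_le_mul_of_nonneg_left hB hp
        calc _ = (1 - b) / m.factorial * (k : ℝ) ^ (-b) * k * 1 := by ring
          _ ≤ _ := this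
          _ = _ := by field_simp; ring
      · have : k = 1 := by omega
        subst this
        simp [lowV]
        apply le_of_eq; rfl
    have hle : lowV m b k ≤ lowV m b (k - 1) := by
      refine le_of_mul_le_mul_left (hkey.trans ?_) hk'
      apply mul_le_mul_of_nonneg_right _ hL'
      linarith
    generalize lowV m b k = U at *
    generalize lowV m b (k-1) = U' at *
    have hn' : (n:ℝ) = m * k + r := by exact_mod_cast hn.symm
    have h1' : (α:ℝ) + β = m.totient := by exact_mod_cast h1
    have h2' : (α:ℝ) ≤ r := by exact_mod_cast h2
    have h6 := mul_le_mul_of_nonneg_left hkey (Nat.cast_nonneg (α := ℝ) m)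
    have h7 : (m:ℝ) * ((k - b) * U') = (m * k - m + α + β) * U' := by
      have : (m:ℝ) * ((k - b) * U') = (m * k - m * b) * U' := by ring
      rw [this, hbm, ← h1']; ring
    have h8 := mul_le_mul_of_nonneg_left hle (sub_nonneg.2 h2')
    have : (n:ℝ) * U ≤ n * rho n m := by
      rw [hn'] at h5 ⊢
      nlinarith
    exact le_of_mul_le_mul_left this hn0

theorem stmt_0 (m : ℕ) (hm : 0 < m) (hsf : Squarefree m) :
    ∃ C : ℝ, 0 < C ∧ ∀ n : ℕ, m ≤ n →
      C * ((n : ℝ) / m) ^ ((Nat.totient m : ℝ) / m - 1) ≤ rho n m ∧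
      rho n m ≤ ((n : ℝ) / m) ^ ((Nat.totient m : ℝ) / m - 1) := by
  have hm' : (0:ℝ) < m := by exact_mod_cast hm
  obtain ⟨b, hbdef⟩ : ∃ b : ℝ, b = 1 - (Nat.totient m : ℝ) / m := ⟨_, rfl⟩
  have hφ : (0:ℝ) < m.totient := by exact_mod_cast Nat.totient_pos.2 hm
  have hφ1 : (m.totient : ℝ) ≤ m := by exact_mod_cast Nat.totient_le m
  have hb : 0 ≤ b := by rw [hbdef, sub_nonneg, div_le_one hm']; exact hφ1
  have hb1 : b < 1 := by rw [hbdef]; linarith [div_pos hφ hm']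
  have hbm : m * b = m - m.totient := by rw [hbdef]; field_simp
  have he : (Nat.totient m : ℝ) / m - 1 = -b := by rw [hbdef]; ring
  rw [he]
  have hc : 0 < (1 - b) / (m.factorial : ℝ) := div_pos (by linarith) (by positivity)
  refine ⟨_, hc, fun n hn => ⟨?_, ?_⟩⟩
  · refine le_trans ?_ (lower m hm b hb hb1 hbm n)
    have hk : 0 < n / m := Nat.div_pos hn hm
    rw [lowV, if_neg hk.ne']
    apply mul_le_mul_of_nonneg_left _ hc.le
    exact Real.rpow_le_rpow_of_nonpos (by exact_mod_cast hk) Nat.cast_div_le (by linarith)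
  · refine (upper m hm b hb hb1.le hbm n).trans ?_
    have hn0 : (0:ℝ) < n := by exact_mod_cast hm.trans_le hn
    apply Real.rpow_le_rpow_of_nonpos (by positivity) _ (by linarith)
    rw [div_le_iff₀ hm']
    have := Nat.lt_div_mul_add (a := n) hm
    have h2 : n ≤ (n / m + 1) * m := by rw [add_mul]; omega
    exact_mod_cast h2
end

section
/- Let m be a positive square-free integer and let C(m) = min{ρ(k,m) : m ≤ k ≤ 2m−1}. Then for all integers n ≥ m, ρ(n,m) ≥ C(m)·⌊n/m⌋^(φ(m)/m − 1). -/
open Finset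

noncomputable def zz (M : Multiset ℕ) : ℕ := M.prod * ∏ i ∈ M.toFinset, (M.count i).factorial

lemma zz_cons (j : ℕ) (M : Multiset ℕ) : zz (j ::ₘ M) = j * (M.count j + 1) * zz M := by
  unfold zz
  have h1 : ∏ i ∈ (j ::ₘ M).toFinset, ((j ::ₘ M).count i).factorial =
      (M.count j + 1) * ∏ i ∈ insert j M.toFinset, (M.count i).factorial := by
    rw [Multiset.toFinset_cons, ← Finset.mul_prod_erase _ _ (Finset.mem_insert_self j M.toFinset),
      ← Finset.mul_prod_erase _ (fun i => (M.count i).factorial)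
        (Finset.mem_insert_self j M.toFinset),
      Multiset.count_cons_self, Nat.factorial_succ, mul_assoc]
    congr 2
    apply Finset.prod_congr rfl
    intro i hi
    rw [Multiset.count_cons_of_ne (Finset.ne_of_mem_erase hi)]
  have h2 : ∏ i ∈ insert j M.toFinset, (M.count i).factorial =
      ∏ i ∈ M.toFinset, (M.count i).factorial := by
    symm
    apply Finset.prod_subset (Finset.subset_insert _ _)
    intro i _ hi
    rw [Multiset.mem_toFinset] at hi
    simp [Multiset.count_eq_zero_of_notMem hi]
  rw [h1, h2, Multiset.prod_cons]
  ring

lemma zz_ones (M : Multiset ℕ) (hM : 1 ∉ M) (k : ℕ) :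
    zz (M + Multiset.replicate k 1) = k.factorial * zz M := by
  induction k with
  | zero => simp
  | succ k ih =>
    rw [Multiset.replicate_succ, Multiset.add_cons, zz_cons, ih, Multiset.count_add,
      Multiset.count_eq_zero_of_notMem hM, Multiset.count_replicate_self, Nat.factorial_succ]
    ring

lemma zz_pos (M : Multiset ℕ) (hM : ∀ i ∈ M, 0 < i) : 0 < zz M := by
  unfold zz
  have : 0 < M.prod := Multiset.prod_pos hM
  positivity

noncomputable def PP (n m : ℕ) : Finset (Multiset ℕ) :=
  (Finset.univ.image (fun p : Nat.Partition n => p.parts)).filter (fun M => ∀ i ∈ M, Nat.Coprime i m)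

lemma mem_PP {n m : ℕ} {M : Multiset ℕ} :
    M ∈ PP n m ↔ (∀ i ∈ M, 0 < i) ∧ M.sum = n ∧ ∀ i ∈ M, Nat.Coprime i m := by
  unfold PP
  simp only [Finset.mem_filter, Finset.mem_image, Finset.mem_univ, true_and]
  constructor
  · rintro ⟨⟨p, rfl⟩, h⟩
    exact ⟨fun i hi => p.parts_pos hi, p.parts_sum, h⟩
  · rintro ⟨h1, h2, h3⟩
    exact ⟨⟨⟨M, fun {i} hi => h1 i hi, h2⟩, rfl⟩, h3⟩

noncomputable def full {n : ℕ} (g : Equiv.Perm (Fin n)) : Multiset ℕ :=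
  g.cycleType + Multiset.replicate (n - g.cycleType.sum) 1

lemma card_full {n m : ℕ} {M : Multiset ℕ} (hM : M ∈ PP n m) :
    (#{g : Equiv.Perm (Fin n) | full g = M}) * zz M = n.factorial := by
  rw [mem_PP] at hM
  obtain ⟨h1, h2, -⟩ := hM
  set N := M.filter (fun i => 2 ≤ i) with hN
  have hMN : M = N + Multiset.replicate (M.count 1) 1 := by
    conv_lhs => rw [← Multiset.filter_add_not (fun i => 2 ≤ i) M]
    congr 1
    rw [← Multiset.filter_eq']
    apply Multiset.filter_congr
    intro i hi
    have := h1 i hi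
    omega
  have hs : N.sum + M.count 1 = n := by
    rw [← h2]; conv_rhs => rw [hMN]
    simp
  have h1N : 1 ∉ N := by simp [hN]
  have hset : ({g : Equiv.Perm (Fin n) | full g = M} : Finset _) =
      ({g : Equiv.Perm (Fin n) | g.cycleType = N} : Finset _) := by
    ext g
    simp only [Finset.mem_filter, Finset.mem_univ, true_and]
    unfold full
    constructor
    · intro h
      rw [hN, ← h, Multiset.filter_add]
      have e1 : g.cycleType.filter (fun i => 2 ≤ i) = g.cycleType :=
        Multiset.filter_eq_self.2 fun i hi => Equiv.Perm.two_le_of_mem_cycleType hi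
      have e2 : (Multiset.replicate (n - g.cycleType.sum) 1).filter (fun i => 2 ≤ i) = 0 := by
        rw [Multiset.filter_eq_nil]
        intro i hi
        rw [Multiset.eq_of_mem_replicate hi]; norm_num
      rw [e1, e2, add_zero]
    · intro h
      rw [h]
      conv_rhs => rw [hMN]
      congr 2
      omega
  have hc := Equiv.Perm.card_of_cycleType_mul_eq (Fin n) N
  rw [if_pos] at hc
  · rw [Fintype.card_fin] at hc
    rw [hset, ← hc]
    conv_lhs => rw [hMN]
    rw [zz_ones N h1N, zz]
    have : n - N.sum = M.count 1 := by omega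
    rw [this]
    ring
  · rw [Fintype.card_fin]
    refine ⟨by omega, fun a ha => ?_⟩
    exact (Multiset.mem_filter.1 ha).2

lemma coprime_lcm (M : Multiset ℕ) (m : ℕ) : Nat.Coprime M.lcm m ↔ ∀ i ∈ M, Nat.Coprime i m := by
  induction M using Multiset.induction_on with
  | empty => simp
  | cons a M ih =>
    rw [Multiset.lcm_cons, Multiset.forall_mem_cons, ← ih]
    constructor
    · intro h
      exact ⟨h.coprime_dvd_left (dvd_lcm_left _ _), h.coprime_dvd_left (dvd_lcm_right _ _)⟩
    · rintro ⟨h, h'⟩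
      exact (h.mul_left h').coprime_dvd_left (lcm_dvd (dvd_mul_right _ _) (dvd_mul_left _ _))

lemma full_mem {n m : ℕ} (g : Equiv.Perm (Fin n)) :
    full g ∈ PP n m ↔ Nat.Coprime (orderOf g) m := by
  rw [mem_PP, ← Equiv.Perm.lcm_cycleType, coprime_lcm]
  have hs := Equiv.Perm.sum_cycleType_le g
  rw [Fintype.card_fin] at hs
  unfold full
  constructor
  · rintro ⟨-, -, h⟩ i hi
    exact h i (Multiset.mem_add.2 (Or.inl hi))
  · intro h
    refine ⟨?_, ?_, ?_⟩
    · intro i hi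
      rcases Multiset.mem_add.1 hi with hi | hi
      · have := Equiv.Perm.two_le_of_mem_cycleType hi
        omega
      · rw [Multiset.eq_of_mem_replicate hi]; norm_num
    · simp; omega
    · intro i hi
      rcases Multiset.mem_add.1 hi with hi | hi
      · exact h i hi
      · rw [Multiset.eq_of_mem_replicate hi]; simp

lemma rho_eq_s2 (n m : ℕ) : rho n m = ∑ M ∈ PP n m, (1 : ℝ) / zz M := by
  unfold rho
  rw [Finset.card_eq_sum_card_fiberwise (f := full) (t := PP n m)]
  · push_cast
    rw [Finset.sum_div]
    apply Finset.sum_congr rfl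
    intro M hM
    have hz : (0 : ℝ) < zz M := by exact_mod_cast zz_pos M (mem_PP.1 hM).1
    have hf : (0 : ℝ) < n.factorial := by positivity
    have hset : ({g ∈ ({π : Equiv.Perm (Fin n) | Nat.Coprime (orderOf π) m} : Finset _) |
        full g = M}) = ({g : Equiv.Perm (Fin n) | full g = M} : Finset _) := by
      ext g
      simp only [Finset.mem_filter, Finset.mem_univ, true_and, and_iff_right_iff_imp]
      rintro rfl
      exact full_mem g |>.1 hM
    rw [hset, div_eq_div_iff hf.ne' hz.ne', one_mul]
    exact_mod_cast card_full hM
  · intro g hg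
    simp only [Finset.coe_filter, Finset.mem_univ, true_and, Set.mem_ofPred_eq] at hg
    exact full_mem g |>.2 hg

lemma rho_rec_s2 (n m : ℕ) :
    (n : ℝ) * rho n m = ∑ j ∈ (Finset.Icc 1 n).filter (fun j => Nat.Coprime j m), rho (n - j) m := by
  rw [rho_eq_s2, Finset.mul_sum]
  have h1 : ∀ M ∈ PP n m, (n : ℝ) * (1 / zz M) =
      ∑ j ∈ (Finset.Icc 1 n).filter (fun j => Nat.Coprime j m),
        if j ∈ M then (j : ℝ) * M.count j / zz M else 0 := by
    intro M hM
    obtain ⟨a, b, c⟩ := mem_PP.1 hM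
    rw [← Finset.sum_filter]
    have hT : ((Finset.Icc 1 n).filter (fun j => Nat.Coprime j m)).filter (fun j => j ∈ M) =
        M.toFinset := by
      ext j
      simp only [Finset.mem_filter, Finset.mem_Icc, Multiset.mem_toFinset]
      constructor
      · exact fun h => h.2
      · intro h
        exact ⟨⟨⟨a j h, b ▸ Multiset.le_sum_of_mem h⟩, c j h⟩, h⟩
    rw [hT, ← Finset.sum_div, mul_one_div]
    congr 1
    conv_lhs => rw [← b, Finset.sum_multiset_count]
    push_cast
    apply Finset.sum_congr rfl
    intro j _
    simp [mul_comm]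
  rw [Finset.sum_congr rfl h1, Finset.sum_comm]
  apply Finset.sum_congr rfl
  intro j hj
  simp only [Finset.mem_filter, Finset.mem_Icc] at hj
  obtain ⟨⟨hj1, hjn⟩, hjm⟩ := hj
  rw [← Finset.sum_filter, rho_eq_s2]
  refine Finset.sum_nbij' (fun M => M.erase j) (fun M => j ::ₘ M) ?_ ?_ ?_ ?_ ?_
  · intro M hM
    obtain ⟨hM, hjM⟩ := Finset.mem_filter.1 hM
    obtain ⟨a, b, c⟩ := mem_PP.1 hM
    refine mem_PP.2 ⟨fun i hi => a i (Multiset.mem_of_mem_erase hi), ?_,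
      fun i hi => c i (Multiset.mem_of_mem_erase hi)⟩
    have := Multiset.sum_erase hjM
    omega
  · intro M hM
    obtain ⟨a, b, c⟩ := mem_PP.1 hM
    refine Finset.mem_filter.2 ⟨mem_PP.2 ⟨?_, ?_, ?_⟩, Multiset.mem_cons_self _ _⟩
    · rw [Multiset.forall_mem_cons]; exact ⟨hj1, a⟩
    · rw [Multiset.sum_cons]; omega
    · rw [Multiset.forall_mem_cons]; exact ⟨hjm, c⟩
  · intro M hM
    exact Multiset.cons_erase (Finset.mem_filter.1 hM).2
  · intro M hM
    exact Multiset.erase_cons_head _ _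
  · intro M hM
    obtain ⟨hM, hjM⟩ := Finset.mem_filter.1 hM
    obtain ⟨a, b, c⟩ := mem_PP.1 hM
    have hz : (0 : ℝ) < zz (M.erase j) := by
      exact_mod_cast zz_pos _ (fun i hi => a i (Multiset.mem_of_mem_erase hi))
    obtain ⟨N, rfl⟩ := Multiset.exists_cons_of_mem hjM
    simp only [Multiset.erase_cons_head] at hz ⊢
    rw [zz_cons, Multiset.count_cons_self]
    have : (0 : ℝ) < j := by exact_mod_cast hj1
    push_cast
    field_simp

lemma rho_shift (n m : ℕ) (h : m ≤ n) :
    (n : ℝ) * rho n m = ((n - m : ℕ) : ℝ) * rho (n - m) m +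
      ∑ j ∈ (Finset.Icc 1 m).filter (fun j => Nat.Coprime j m), rho (n - j) m := by
  rw [rho_rec_s2, rho_rec_s2]
  have hd : (Finset.Icc 1 n).filter (fun j => Nat.Coprime j m) =
      (Finset.Icc 1 m).filter (fun j => Nat.Coprime j m) ∪
      ((Finset.Icc 1 (n - m)).filter (fun j => Nat.Coprime j m)).image (fun j => j + m) := by
    ext j
    simp only [Finset.mem_filter, Finset.mem_Icc, Finset.mem_union, Finset.mem_image]
    constructor
    · rintro ⟨⟨a, b⟩, c⟩
      by_cases hjm : j ≤ m
      · exact Or.inl ⟨⟨a, hjm⟩, c⟩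
      · refine Or.inr ⟨j - m, ⟨⟨by omega, by omega⟩, ?_⟩, by omega⟩
        have : j = (j - m) + m := by omega
        rw [this] at c
        simpa using c
    · rintro (⟨⟨a, b⟩, c⟩ | ⟨i, ⟨⟨a, b⟩, c⟩, rfl⟩)
      · exact ⟨⟨a, by omega⟩, c⟩
      · exact ⟨⟨by omega, by omega⟩, by simpa using c⟩
  rw [hd, Finset.sum_union, add_comm, Finset.sum_image]
  · congr 1
    apply Finset.sum_congr rfl
    intro j _
    congr 1
    omega
  · intro a _ b _ hab
    simpa using hab
  · rw [Finset.disjoint_left]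
    intro j hj hj'
    simp only [Finset.mem_filter, Finset.mem_Icc, Finset.mem_image] at hj hj'
    obtain ⟨i, hi, rfl⟩ := hj'
    omega

lemma rho_nonneg (n m : ℕ) : 0 ≤ rho n m := by unfold rho; positivity

lemma card_res (m : ℕ) : #((Finset.Icc 1 m).filter (fun j => Nat.Coprime j m)) = Nat.totient m := by
  rw [← Nat.filter_coprime_Ico_eq_totient m 1]
  congr 1
  ext j
  simp only [Finset.mem_filter, Finset.mem_Icc, Finset.mem_Ico, Nat.coprime_comm]
  constructor <;> rintro ⟨h, h'⟩ <;> exact ⟨by omega, h'⟩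

/-- The analytic inequality. -/
lemma key_ineq (m φ c q r : ℕ) (hm : 0 < m) (hφ : φ ≤ m) (hc : c ≤ φ) (hcr : c ≤ r) (hq : 2 ≤ q) :
    ((q * m + r : ℕ) : ℝ) * (q : ℝ) ^ ((φ : ℝ) / m - 1) ≤
      ((q * m + r - m : ℕ) : ℝ) * ((q - 1 : ℕ) : ℝ) ^ ((φ : ℝ) / m - 1) +
      (c * (q : ℝ) ^ ((φ : ℝ) / m - 1) +
        ((φ : ℝ) - c) * ((q - 1 : ℕ) : ℝ) ^ ((φ : ℝ) / m - 1)) := by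
  obtain ⟨p, rfl⟩ : ∃ p, q = p + 1 := ⟨q - 1, by omega⟩
  have hp : (1 : ℝ) ≤ p := by exact_mod_cast (by omega : 1 ≤ p)
  have hm' : (0 : ℝ) < m := by exact_mod_cast hm
  have hφ' : (φ : ℝ) ≤ m := by exact_mod_cast hφ
  have hc' : (c : ℝ) ≤ φ := by exact_mod_cast hc
  have hcr' : (c : ℝ) ≤ r := by exact_mod_cast hcr
  have e : (p + 1) * m + r - m = p * m + r := by rw [add_mul, one_mul]; omega
  rw [e, Nat.add_sub_cancel]
  push_cast
  set b : ℝ := 1 - (φ : ℝ) / m with hb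
  have hb0 : 0 ≤ b := by rw [hb, sub_nonneg, div_le_one hm']; exact hφ'
  have hb1 : b ≤ 1 := by rw [hb]; linarith [div_nonneg (Nat.cast_nonneg (α := ℝ) φ) hm'.le]
  have hbm : (φ : ℝ) = m - b * m := by rw [hb]; field_simp; ring
  have e2 : (φ : ℝ) / m - 1 = -b := by rw [hb]; ring
  rw [e2]
  have hB := rpow_one_add_le_one_add_mul_self (s := -1 / ((p : ℝ) + 1))
    (by rw [le_div_iff₀ (by linarith)]; linarith) hb0 hb1
  have e3 : 1 + -1 / ((p : ℝ) + 1) = p / (p + 1) := by field_simp; ring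
  rw [e3, Real.div_rpow (by linarith) (by linarith)] at hB
  have hP : 0 < (p : ℝ) ^ b := Real.rpow_pos_of_pos (by linarith) _
  have hQ : 0 < ((p : ℝ) + 1) ^ b := Real.rpow_pos_of_pos (by linarith) _
  rw [Real.rpow_neg (by linarith), Real.rpow_neg (by linarith)]
  set P := (p : ℝ) ^ b
  set Q := ((p : ℝ) + 1) ^ b
  have hp1 : (0 : ℝ) < p + 1 := by linarith
  have hB' : P * (p + 1) ≤ (p + 1 - b) * Q := by
    have e4 : 1 + b * (-1 / ((p : ℝ) + 1)) = (p + 1 - b) / (p + 1) := by field_simp; ring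
    rw [e4, div_le_div_iff₀ hQ hp1] at hB
    exact hB
  -- it remains to bound the combination
  have hPQ : P ≤ Q := by
    have : P * (p + 1) ≤ Q * (p + 1) := by nlinarith [mul_nonneg hb0 hQ.le]
    exact le_of_mul_le_mul_right this hp1
  have main : (((p : ℝ) + 1) * m + r - c) * P ≤ (p * m + r + (φ - c)) * Q := by
    rw [hbm]
    nlinarith [mul_le_mul_of_nonneg_left hB' hm'.le,
      mul_le_mul_of_nonneg_left hPQ (sub_nonneg.2 hcr')]
  have h5 : (((p : ℝ) + 1) * m + r - c) * Q⁻¹ ≤ (p * m + r + (φ - c)) * P⁻¹ := by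
    rw [← div_eq_mul_inv, ← div_eq_mul_inv, div_le_div_iff₀ hQ hP]
    exact main
  linarith

theorem stmt_2 (m : ℕ) (hm : 0 < m) (hsf : Squarefree m) (C : ℝ)
    (hC : IsLeast {x : ℝ | ∃ k : ℕ, m ≤ k ∧ k ≤ 2 * m - 1 ∧ x = rho k m} C) :
    ∀ n : ℕ, m ≤ n →
      C * ((⌊(n : ℝ) / m⌋ : ℝ)) ^ ((Nat.totient m : ℝ) / m - 1) ≤ rho n m := by
  have hC0 : 0 ≤ C := by
    obtain ⟨k, -, -, rfl⟩ := hC.1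
    exact rho_nonneg k m
  set a : ℝ := (Nat.totient m : ℝ) / m - 1 with ha
  have main : ∀ n : ℕ, m ≤ n → C * ((n / m : ℕ) : ℝ) ^ a ≤ rho n m := by
    intro n
    induction n using Nat.strong_induction_on with
    | _ n ih =>
    intro hn
    by_cases hn2 : n < 2 * m
    · have : n / m = 1 := Nat.div_eq_of_lt_le (by omega) (by omega)
      rw [this]
      simp only [Nat.cast_one, Real.one_rpow, mul_one]
      exact hC.2 ⟨n, hn, by omega, rfl⟩
    · push Not at hn2
      set q := n / m with hq
      set r := n % m with hr
      have hqr : n = q * m + r := by rw [hq, hr, mul_comm]; exact (Nat.div_add_mod n m).symm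
      have hrm : r < m := Nat.mod_lt _ hm
      have hq2 : 2 ≤ q := (Nat.le_div_iff_mul_le hm).2 hn2
      obtain ⟨p, hp⟩ : ∃ p, q = p + 1 := ⟨q - 1, by omega⟩
      have hqm : q * m = p * m + m := by rw [hp]; ring
      have hpm : m ≤ p * m := Nat.le_mul_of_pos_left m (by omega)
      have hlow : ∀ k, p * m ≤ k → k < p * m + m → k / m = p := by
        intro k h1 h2
        exact Nat.div_eq_of_lt_le h1 (by rw [add_mul, one_mul]; exact h2)
      have hhigh : ∀ k, q * m ≤ k → k < q * m + m → k / m = q := by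
        intro k h1 h2
        exact Nat.div_eq_of_lt_le h1 (by rw [add_mul, one_mul]; exact h2)
      set R := (Finset.Icc 1 m).filter (fun j => Nat.Coprime j m) with hR
      set c := #(R.filter (fun j => j ≤ r)) with hc
      have hcφ : c ≤ Nat.totient m := by
        rw [← card_res m]; exact Finset.card_filter_le _ _
      have hcr : c ≤ r := by
        have : R.filter (fun j => j ≤ r) ⊆ Finset.Icc 1 r := by
          intro j hj
          simp only [hR, Finset.mem_filter, Finset.mem_Icc] at hj ⊢
          omega
        simpa using Finset.card_le_card this
      have hc2 : ((#(R.filter (fun j => ¬ j ≤ r)) : ℕ) : ℝ) = (Nat.totient m : ℝ) - c := by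
        have := Finset.card_filter_add_card_filter_not (s := R) (fun j => j ≤ r)
        rw [card_res m] at this
        rw [← this]; push_cast; ring
      have hk := key_ineq m (Nat.totient m) c q r hm (Nat.totient_le m) hcφ hcr hq2
      rw [← hqr, ← ha] at hk
      have hp' : q - 1 = p := by omega
      rw [hp'] at hk
      have hsum : C * (c * (q : ℝ) ^ a + ((Nat.totient m : ℝ) - c) * (p : ℝ) ^ a) ≤
          ∑ j ∈ R, rho (n - j) m := by
        rw [← Finset.sum_filter_add_sum_filter_not R (fun j => j ≤ r), mul_add]
        apply add_le_add
        · have : C * (c * (q : ℝ) ^ a) = ∑ j ∈ R.filter (fun j => j ≤ r), C * (q : ℝ) ^ a := by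
            rw [Finset.sum_const, nsmul_eq_mul]; ring
          rw [this]
          apply Finset.sum_le_sum
          intro j hj
          simp only [hR, Finset.mem_filter, Finset.mem_Icc] at hj
          have h := ih (n - j) (by omega) (by omega)
          rwa [hhigh (n - j) (by omega) (by omega)] at h
        · have : C * (((Nat.totient m : ℝ) - c) * (p : ℝ) ^ a) =
              ∑ j ∈ R.filter (fun j => ¬ j ≤ r), C * (p : ℝ) ^ a := by
            rw [Finset.sum_const, nsmul_eq_mul, hc2]; ring
          rw [this]
          apply Finset.sum_le_sum
          intro j hj
          simp only [hR, Finset.mem_filter, Finset.mem_Icc] at hj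
          have h := ih (n - j) (by omega) (by omega)
          rwa [hlow (n - j) (by omega) (by omega)] at h
      have h0 : C * (p : ℝ) ^ a ≤ rho (n - m) m := by
        have h := ih (n - m) (by omega) (by omega)
        rwa [hlow (n - m) (by omega) (by omega)] at h
      have hs := rho_shift n m hn
      have h0' := mul_le_mul_of_nonneg_left h0 (Nat.cast_nonneg (α := ℝ) (n - m))
      have hk' := mul_le_mul_of_nonneg_left hk hC0
      have hn0 : (0 : ℝ) < n := by exact_mod_cast (by omega : 0 < n)
      have : (n : ℝ) * (C * (q : ℝ) ^ a) ≤ n * rho n m := by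
        rw [hs]; linarith
      exact le_of_mul_le_mul_left this hn0
  intro n hn
  have hfl : (⌊(n : ℝ) / m⌋ : ℤ) = ((n / m : ℕ) : ℤ) := by
    rw [← Nat.floor_div_eq_div (K := ℝ) n m, Int.natCast_floor_eq_floor (by positivity)]
  rw [hfl]
  exact_mod_cast main n hn
end
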